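/- arXiv:1912.13188 — 6 statements merged into one kernel-verified Lean document; each statement's English description precedes it below -/
import Mathlib

section
/- Let δ ∈ (0,1) and let p ∈ (δ, 1], q ∈ [0, 1−δ) be real numbers. Then p(1−q)/(p(1−q) + q(1−p)) + (q+δ)(1−p+δ)/((q+δ)(1−p+δ) + (p−δ)(1−q−δ)) − 1 ≥ δ²/(δ² + (1−δ)²). -/
/-!
Put `B = q(1-p)`, `D = (p-δ)(1-q-δ)`, and let `A = p(1-q)`, `C = (q+δ)(1-p+δ)` be the two numerators.
The right-hand side is `(AC - BD) / ((A+B)(C+D))`. Centre the variables at the midpoint of `[δ, 1]`: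
`p = (1+δ)/2 + x`, `1 - q = (1+δ)/2 + y`, with `|x|, |y| ≤ h = (1-δ)/2`. After clearing
denominators the claim is affine in `(x+y)²` for fixed `m = xy`, with negative slope, and `BD ≥ 0`
bounds `(x+y)²` by `(h² + m)²/h²`. What remains is a concave quadratic in `m` on `[-h², h²]`,
nonnegative at both ends (zero at `m = h²`). Written out, this argument is the
identity in `key_identity`, whose right-hand side is visibly nonnegative.
-/

/-- The factor `1 - δ` on the left clears the `h²` in the bound on `(x+y)²`. On the right,
`q * (1 - p) + (p - δ) * (1 - q - δ)` is `2(h² + m)` and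
`(1 - p) * (1 - q - δ) + (p - δ) * q` is `2(h² - m)`. -/
lemma key_identity (δ p q : ℝ) :
    (1 - δ) * ((δ ^ 2 + (1 - δ) ^ 2) *
        (p * (1 - q) * ((q + δ) * (1 - p + δ)) - q * (1 - p) * ((p - δ) * (1 - q - δ)))
      - δ ^ 2 * ((p * (1 - q) + q * (1 - p)) *
        ((q + δ) * (1 - p + δ) + (p - δ) * (1 - q - δ))))
    = δ * (4 * ((1 - δ) + δ ^ 2) * (q * (1 - p) * ((p - δ) * (1 - q - δ)))
      + ((1 - p) * (1 - q - δ) + (p - δ) * q) *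
        (δ * (1 - δ) + (q * (1 - p) + (p - δ) * (1 - q - δ)))) := by
  ring

theorem stmt_3 (δ p q : ℝ) (hδ : δ ∈ Set.Ioo (0 : ℝ) 1)
    (hp : p ∈ Set.Ioc δ 1) (hq : q ∈ Set.Ico (0 : ℝ) (1 - δ)) :
    δ ^ 2 / (δ ^ 2 + (1 - δ) ^ 2)
      ≤ p * (1 - q) / (p * (1 - q) + q * (1 - p))
        + (q + δ) * (1 - p + δ) / ((q + δ) * (1 - p + δ) + (p - δ) * (1 - q - δ)) - 1 := by
  obtain ⟨hδ0, hδ1⟩ := hδ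
  obtain ⟨hp0, hp1⟩ := hp
  obtain ⟨hq0, hq1⟩ := hq
  have h1δ : 0 < 1 - δ := by linarith
  have hpδ : 0 ≤ p - δ := by linarith
  have h1p : 0 ≤ 1 - p := by linarith
  have hqδ : 0 ≤ 1 - q - δ := by linarith
  have hA : 0 < p * (1 - q) := mul_pos (by linarith) (by linarith)
  have hC : 0 < (q + δ) * (1 - p + δ) := mul_pos (by linarith) (by linarith)
  have hB : 0 ≤ q * (1 - p) := by positivity
  have hD : 0 ≤ (p - δ) * (1 - q - δ) := by positivity
  have key := key_identity δ p q
  have hR : 0 ≤ δ * (4 * ((1 - δ) + δ ^ 2) * (q * (1 - p) * ((p - δ) * (1 - q - δ)))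
      + ((1 - p) * (1 - q - δ) + (p - δ) * q) *
        (δ * (1 - δ) + (q * (1 - p) + (p - δ) * (1 - q - δ)))) := by positivity
  rw [← key] at hR
  have hF := nonneg_of_mul_nonneg_right hR h1δ
  generalize p * (1 - q) = A at *
  generalize q * (1 - p) = B at *
  generalize (q + δ) * (1 - p + δ) = C at *
  generalize (p - δ) * (1 - q - δ) = D at *
  have hAB : 0 < A + B := by linarith
  have hCD : 0 < C + D := by linarith
  have e : A / (A + B) + C / (C + D) - 1 = (A * C - B * D) / ((A + B) * (C + D)) := by
    field_simp
    ring
  rw [e, div_le_div_iff₀ (by positivity) (by positivity)]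
  linarith
end

section
/- Let β₀, β₁, ν, s be real numbers and let p, q ∈ (0,1) satisfy log(p/(1−p)) = β₀ + ν + β₁·s and log(q/(1−q)) = β₀ + β₁·s. Then p(1−q) / (p(1−q) + q(1−p)) = 1 / (1 + e^{−ν}). In particular, this conditional probability does not depend on β₀, β₁, or the paper representation s. -/
/-- under the generalized logistic model with no bias, the
disagreement-conditional acceptance probability equals `1/(1 + e^{-ν})`,
independently of `β₀`, `β₁` and the paper representation `s`. -/
theorem stmt_7 (β₀ β₁ ν s p q : ℝ) (hp : p ∈ Set.Ioo (0 : ℝ) 1) (hq : q ∈ Set.Ioo (0 : ℝ) 1)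
    (hlp : Real.log (p / (1 - p)) = β₀ + ν + β₁ * s)
    (hlq : Real.log (q / (1 - q)) = β₀ + β₁ * s) :
    p * (1 - q) / (p * (1 - q) + q * (1 - p)) = 1 / (1 + Real.exp (-ν)) := by
  obtain ⟨hp0, hp1⟩ := hp
  obtain ⟨hq0, hq1⟩ := hq
  have hp' : 0 < 1 - p := sub_pos.2 hp1
  have hq' : 0 < 1 - q := sub_pos.2 hq1
  -- `β₀ + β₁ * s` cancels in the difference of log-odds, so `exp (-ν)` is the odds ratio.
  have hν : Real.exp (-ν) = q / (1 - q) / (p / (1 - p)) := by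
    rw [show -ν = Real.log (q / (1 - q)) - Real.log (p / (1 - p)) by rw [hlp, hlq]; ring,
      Real.exp_sub, Real.exp_log (div_pos hq0 hq'), Real.exp_log (div_pos hp0 hp')]
  have he : 1 + Real.exp (-ν) = (p * (1 - q) + q * (1 - p)) / (p * (1 - q)) := by
    rw [hν]
    field_simp
  rw [he, one_div_div]
end

section
/- Let k be a natural number, w : Fin k → {−1, 1}, t ∈ ℝ, and b₀, d₀, b₁, c₁, …, c_k ∈ ℝ. Let p, q ∈ (0,1) satisfy log(p/(1−p)) = b₀ + b₁·t + Σ_{ℓ=1}^{k} c_ℓ·w_ℓ and log(q/(1−q)) = d₀ + b₁·t. Let Y and X be independent random variables on a probability space with Y ~ Bernoulli(p) and X ~ Bernoulli(q), and let r = P(Y = 1 | Y ≠ X). Then log(r/(1−r)) = (b₀ − d₀) + Σ_{ℓ=1}^{k} c_ℓ·w_ℓ. -/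
open MeasureTheory ProbabilityTheory

/-!
Almost surely `Y` and `X` take values in `{0, 1}`, so up to null sets the disagreement event is the
disjoint union of `{Y = 1, X = 0}` and `{Y = 0, X = 1}`, which by independence have probabilities
`p (1 - q)` and `(1 - p) q`. Hence the odds of `Y = 1` given disagreement are
`p (1 - q) / ((1 - p) q)`, the ratio of the odds of `p` and `q`, and its logarithm is the difference
of the two logits, in which `b₁ * t` cancels.
-/

/-- A variable putting masses `p` and `1 - p` on `1` and `0` takes no other value, almost surely. -/
lemma ae_zero_or_one {Ω : Type*} [MeasurableSpace Ω] {μ : Measure Ω} [IsProbabilityMeasure μ]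
    {Z : Ω → ℝ} (hZ : Measurable Z) {p : ℝ} (hp : p ∈ Set.Ioo (0 : ℝ) 1)
    (h1 : μ {ω | Z ω = 1} = ENNReal.ofReal p)
    (h0 : μ {ω | Z ω = 0} = ENNReal.ofReal (1 - p)) :
    ∀ᵐ ω ∂μ, Z ω = 0 ∨ Z ω = 1 := by
  have m0 : MeasurableSet {ω | Z ω = 0} := hZ (measurableSet_singleton 0)
  have m1 : MeasurableSet {ω | Z ω = 1} := hZ (measurableSet_singleton 1)
  have hd : Disjoint {ω | Z ω = 0} {ω | Z ω = 1} := by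
    rw [Set.disjoint_left]
    intro ω h h'
    simp only [Set.mem_ofPred_eq] at h h'
    linarith
  have hu : μ ({ω | Z ω = 0} ∪ {ω | Z ω = 1}) = 1 := by
    rw [measure_union hd m1, h0, h1,
      ← ENNReal.ofReal_add (by linarith [hp.2]) hp.1.le]
    simp
  exact (mem_ae_iff_prob_eq_one (m0.union m1)).2 hu

/-- With `x = p (1 - q)` and `y = (1 - p) q`, the masses of the two disagreement events, the
log-odds of `x / (x + y)` equal `log (x / y)`, which is the difference of the logits of `p`
and `q`. -/
lemma log_odds_disagree {p q : ℝ} (hp : p ∈ Set.Ioo (0 : ℝ) 1) (hq : q ∈ Set.Ioo (0 : ℝ) 1) :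
    Real.log (((p * (1 - q) + (1 - p) * q)⁻¹ * (p * (1 - q))) /
      (1 - (p * (1 - q) + (1 - p) * q)⁻¹ * (p * (1 - q))))
      = Real.log (p / (1 - p)) - Real.log (q / (1 - q)) := by
  have hp0 := hp.1
  have hq0 := hq.1
  have hp1 : 0 < 1 - p := sub_pos.2 hp.2
  have hq1 : 0 < 1 - q := sub_pos.2 hq.2
  have hs : 0 < p * (1 - q) + (1 - p) * q := by positivity
  have hr : 1 - (p * (1 - q) + (1 - p) * q)⁻¹ * (p * (1 - q))
      = (p * (1 - q) + (1 - p) * q)⁻¹ * ((1 - p) * q) := by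
    linear_combination -(inv_mul_cancel₀ hs.ne')
  rw [hr, mul_div_mul_left _ _ (inv_pos.2 hs).ne', ← Real.log_div (by positivity) (by positivity)]
  congr 1
  field_simp

/-- Proposition 7(b): under the generalized logistic model with `k` binary
properties, conditioning on disagreement of the independent Bernoulli pair `(Y, X)` yields
`logit P(Y = 1 | Y ≠ X) = (b₀ - d₀) + ∑ c_ℓ w_ℓ`, eliminating the paper representation `t`. -/
theorem stmt_9 {Ω : Type*} [MeasurableSpace Ω] (μ : Measure Ω) [IsProbabilityMeasure μ]
    (k : ℕ) (w : Fin k → ℝ) (hw : ∀ ℓ, w ℓ = -1 ∨ w ℓ = 1)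
    (t b₀ d₀ b₁ : ℝ) (c : Fin k → ℝ)
    (p q : ℝ) (hp : p ∈ Set.Ioo (0 : ℝ) 1) (hq : q ∈ Set.Ioo (0 : ℝ) 1)
    (hlp : Real.log (p / (1 - p)) = b₀ + b₁ * t + ∑ ℓ, c ℓ * w ℓ)
    (hlq : Real.log (q / (1 - q)) = d₀ + b₁ * t)
    (Y X : Ω → ℝ) (hYm : Measurable Y) (hXm : Measurable X)
    (hind : IndepFun Y X μ)
    (hY1 : μ {ω | Y ω = 1} = ENNReal.ofReal p)
    (hY0 : μ {ω | Y ω = 0} = ENNReal.ofReal (1 - p))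
    (hX1 : μ {ω | X ω = 1} = ENNReal.ofReal q)
    (hX0 : μ {ω | X ω = 0} = ENNReal.ofReal (1 - q)) :
    Real.log ((((μ[|{ω | Y ω ≠ X ω}]) {ω | Y ω = 1}).toReal)
        / (1 - (((μ[|{ω | Y ω ≠ X ω}]) {ω | Y ω = 1}).toReal)))
      = (b₀ - d₀) + ∑ ℓ, c ℓ * w ℓ := by
  have mEq {Z : Ω → ℝ} (hZ : Measurable Z) (a : ℝ) : MeasurableSet {ω | Z ω = a} :=
    hZ (measurableSet_singleton a)
  have mD : MeasurableSet {ω | Y ω ≠ X ω} := (measurableSet_eq_fun hYm hXm).compl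
  have hY := ae_zero_or_one hYm hp hY1 hY0
  have hX := ae_zero_or_one hXm hq hX1 hX0
  have hp0 := hp.1.le
  have hq0 := hq.1.le
  have hp1 : 0 ≤ 1 - p := sub_nonneg.2 hp.2.le
  have hq1 : 0 ≤ 1 - q := sub_nonneg.2 hq.2.le
  have h10 : μ ({ω | Y ω = 1} ∩ {ω | X ω = 0}) = ENNReal.ofReal (p * (1 - q)) := by
    rw [ENNReal.ofReal_mul hp0, ← hY1, ← hX0]
    exact hind.measure_inter_preimage_eq_mul _ _ (measurableSet_singleton 1)
      (measurableSet_singleton 0)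
  have h01 : μ ({ω | Y ω = 0} ∩ {ω | X ω = 1}) = ENNReal.ofReal ((1 - p) * q) := by
    rw [ENNReal.ofReal_mul hp1, ← hY0, ← hX1]
    exact hind.measure_inter_preimage_eq_mul _ _ (measurableSet_singleton 0)
      (measurableSet_singleton 1)
  have hDA : μ ({ω | Y ω ≠ X ω} ∩ {ω | Y ω = 1}) = ENNReal.ofReal (p * (1 - q)) := by
    rw [← h10]
    apply measure_congr
    filter_upwards [hX] with ω hx
    apply propext
    change (Y ω ≠ X ω ∧ Y ω = 1) ↔ (Y ω = 1 ∧ X ω = 0)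
    rcases hx with hx | hx <;> rw [hx] <;> grind
  have hD : μ {ω | Y ω ≠ X ω} = ENNReal.ofReal (p * (1 - q) + (1 - p) * q) := by
    rw [ENNReal.ofReal_add (by positivity) (by positivity), ← h10, ← h01,
      ← measure_union _ ((mEq hYm 0).inter (mEq hXm 1))]
    · apply measure_congr
      filter_upwards [hY, hX] with ω hy hx
      apply propext
      change Y ω ≠ X ω ↔ (Y ω = 1 ∧ X ω = 0) ∨ (Y ω = 0 ∧ X ω = 1)
      rcases hx with hx | hx <;> rcases hy with hy | hy <;> rw [hx, hy] <;> norm_num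
    · rw [Set.disjoint_left]
      rintro ω ⟨h, -⟩ ⟨h', -⟩
      simp only [Set.mem_ofPred_eq] at h h'
      linarith
  rw [cond_apply mD, hDA, hD, ENNReal.toReal_mul, ENNReal.toReal_inv,
    ENNReal.toReal_ofReal (by positivity), ENNReal.toReal_ofReal (by positivity),
    log_odds_disagree hp hq, hlp, hlq]
  ring
end

section
/- Let P and R be finite sets, let λ ≥ μ ≥ 1 be natural numbers, and let A ⊆ P × R be a relation such that every p ∈ P is related to at least λ elements of R and every r ∈ R is related to at most μ elements of P. Then there exists an injective function f : P → R such that (p, f(p)) ∈ A for every p ∈ P. -/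
/-!
By Hall's marriage theorem it suffices that every finite `S ⊆ P` has at least `#S` neighbours.
Double counting the related pairs between `S` and its neighbourhood `N` gives
`#S * L ≤ #N * M`, and `#S * M ≤ #S * L` because `M ≤ L`; cancelling `M > 0` yields `#S ≤ #N`.
-/

/-- Lemma 3, Hall's condition for the exact matching algorithm: for finite
sets `P`, `R` and a relation `A` in which every `p ∈ P` is related to at least `L` elements
of `R` and every `r ∈ R` to at most `M ≤ L` elements of `P` (with `1 ≤ M`), there is an
injective choice function `f : P → R` with `A p (f p)` for all `p`. -/
theorem stmt_17 {P R : Type*} [Fintype P] [Fintype R]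
    (L M : ℕ) (hM : 1 ≤ M) (hML : M ≤ L)
    (A : P → R → Prop)
    (hdeg : ∀ p : P, L ≤ {r : R | A p r}.ncard)
    (hcap : ∀ r : R, {p : P | A p r}.ncard ≤ M) :
    ∃ f : P → R, Function.Injective f ∧ ∀ p, A p (f p) := by
  classical
  -- Hall's theorem: it suffices that every `S` has at least `#S` neighbours.
  refine (Fintype.all_card_le_filter_rel_iff_exists_injective A).mp fun S => ?_
  -- Count the pairs of `A` between `S` and its set of neighbours: `#S * L ≤ #N(S) * M`.
  have key : S.card * L ≤ (Finset.univ.filter fun r => ∃ p ∈ S, A p r).card * M := by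
    refine Finset.card_mul_le_card_mul A (fun p hp => (hdeg p).trans ?_)
      (fun r _ => le_trans ?_ (hcap r))
    · rw [← Set.ncard_coe_finset]
      refine Set.ncard_le_ncard (fun r hr => ?_) (Set.toFinite _)
      simpa [Finset.bipartiteAbove] using ⟨⟨p, hp, hr⟩, hr⟩
    · rw [← Set.ncard_coe_finset]
      refine Set.ncard_le_ncard (fun p hp => ?_) (Set.toFinite _)
      exact (Finset.mem_filter.mp hp).2
  exact Nat.le_of_mul_le_mul_right ((Nat.mul_le_mul_left _ hML).trans key) hM
end

section
/- Let P be a finite set partitioned into disjoint subsets 𝒥 and 𝒥̄, let R₁ and R₂ be finite sets, and let μ ≥ 1 be a natural number. Let A₁ ⊆ P × R₁ and A₂ ⊆ P × R₂ be relations such that every p ∈ P is related to at least one element of R₁ under A₁ and to at least one element of R₂ under A₂, and every element of R₁ (respectively R₂) is related to at most μ elements of P. Let γ = ⌊min(|𝒥|, |𝒥̄|) / (4μ)⌋ and assume γ ≥ 1. Then there exist subsets S ⊆ 𝒥 and S̄ ⊆ 𝒥̄ with |S| ≥ γ and |S̄| ≥ γ, and injective functions f : S ∪ S̄ → R₁ and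 g : S ∪ S̄ → R₂ such that (p, f(p)) ∈ A₁ and (p, g(p)) ∈ A₂ for every p ∈ S ∪ S̄. -/
/-!
Fix once and for all a reviewer `f p` in the first condition and `g p` in the second for every
paper `p`. Since the fibres of `f` and `g` have at most `M` elements, each selected paper rules
out at most `2 * M` papers, namely those sharing its `f`- or `g`-value. Hence a conflict-free
selection can be extended by `n` papers from a pool `X` as soon as
`2 * M * (|T| + n) ≤ |X|`, where `T` is the current selection (`exists_extension`). Selecting
`γ` papers from `J`, then `γ` papers from `Jᶜ`, needs pools of size `2 * M * γ` and `4 * M * γ`.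
-/

/-- The papers sharing a value of `f` with some element of `T` number at most `M * |T|`. -/
lemma card_conflict_le {P R : Type*} [Fintype P] [DecidableEq R] (f : P → R) (M : ℕ)
    (hf : ∀ r, (Finset.univ.filter (fun p => f p = r)).card ≤ M) (T : Finset P) :
    (Finset.univ.filter (fun p => f p ∈ T.image f)).card ≤ M * T.card :=
  (Finset.card_le_mul_card_image_of_maps_to (f := f) (t := T.image f) (by simp) M
    (fun r _ => (Finset.card_le_card (by intro p; simp)).trans (hf r))).trans
    (Nat.mul_le_mul_left M Finset.card_image_le)

/-- The greedy step, iterated `n` times. -/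
lemma exists_extension {P R₁ R₂ : Type*} [Fintype P] [DecidableEq P] [DecidableEq R₁]
    [DecidableEq R₂] (f : P → R₁) (g : P → R₂) (M : ℕ) (hM : 1 ≤ M)
    (hf : ∀ r, (Finset.univ.filter (fun p => f p = r)).card ≤ M)
    (hg : ∀ r, (Finset.univ.filter (fun p => g p = r)).card ≤ M)
    (X T : Finset P) (hfT : Set.InjOn f T) (hgT : Set.InjOn g T) (n : ℕ)
    (hn : 2 * M * (T.card + n) ≤ X.card) :
    ∃ S ⊆ X, S.card = n ∧ Set.InjOn f (T ∪ S : Finset P) ∧ Set.InjOn g (T ∪ S : Finset P) := by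
  induction n with
  | zero => exact ⟨∅, by simp, by simp, by simpa using hfT, by simpa using hgT⟩
  | succ n ih =>
    obtain ⟨S, hSX, hS, hfS, hgS⟩ := ih (by nlinarith)
    have hcard : (T ∪ S).card ≤ T.card + n := hS ▸ Finset.card_union_le T S
    have h1 := card_conflict_le f M hf (T ∪ S)
    have h2 := card_conflict_le g M hg (T ∪ S)
    have hlt : (Finset.univ.filter (fun p => f p ∈ (T ∪ S).image f) ∪
        Finset.univ.filter (fun p => g p ∈ (T ∪ S).image g)).card < X.card := by
      refine (Finset.card_union_le _ _).trans_lt ?_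
      have h3 := Nat.mul_le_mul_left M hcard
      nlinarith
    obtain ⟨p, hpX, hp⟩ := Finset.exists_mem_notMem_of_card_lt_card hlt
    simp only [Finset.mem_union (s := Finset.filter _ _), Finset.mem_filter, Finset.mem_univ,
      true_and, not_or] at hp
    have hpTS : p ∉ T ∪ S := fun h => hp.1 (Finset.mem_image_of_mem f h)
    have hpS : p ∉ S := fun h => hpTS (Finset.mem_union_right T h)
    refine ⟨insert p S, Finset.insert_subset hpX hSX, by simp [hpS, hS], ?_, ?_⟩
    · rw [Finset.union_insert, Finset.coe_insert, Set.injOn_insert (by exact_mod_cast hpTS)]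
      exact ⟨hfS, by rw [← Finset.coe_image]; exact_mod_cast hp.1⟩
    · rw [Finset.union_insert, Finset.coe_insert, Set.injOn_insert (by exact_mod_cast hpTS)]
      exact ⟨hgS, by rw [← Finset.coe_image]; exact_mod_cast hp.2⟩

/-- Lemma 4, guarantee of the greedy matching algorithm: with `P` partitioned
into `J` and `Jᶜ`, relations `A₁ ⊆ P × R₁`, `A₂ ⊆ P × R₂` in which every paper has at least
one reviewer in each condition and every reviewer has at most `M` papers, and
`γ = ⌊min(|J|, |Jᶜ|)/(4M)⌋ ≥ 1`, one can select `S ⊆ J` and `S' ⊆ Jᶜ` of size at least `γ`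
each and match every selected paper injectively to one of its reviewers in each condition. -/
theorem stmt_18 {P R₁ R₂ : Type*} [Fintype P] [Fintype R₁] [Fintype R₂]
    (J : Set P) (M : ℕ) (hM : 1 ≤ M)
    (A₁ : P → R₁ → Prop) (A₂ : P → R₂ → Prop)
    (h₁ : ∀ p : P, ∃ r, A₁ p r) (h₂ : ∀ p : P, ∃ r, A₂ p r)
    (hcap₁ : ∀ r : R₁, {p : P | A₁ p r}.ncard ≤ M)
    (hcap₂ : ∀ r : R₂, {p : P | A₂ p r}.ncard ≤ M)
    (γ : ℕ) (hγdef : γ = min J.ncard Jᶜ.ncard / (4 * M)) (hγ : 1 ≤ γ) :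
    ∃ S S' : Set P, S ⊆ J ∧ S' ⊆ Jᶜ ∧ γ ≤ S.ncard ∧ γ ≤ S'.ncard ∧
      ∃ f : P → R₁, ∃ g : P → R₂,
        Set.InjOn f (S ∪ S') ∧ Set.InjOn g (S ∪ S') ∧
        ∀ p ∈ S ∪ S', A₁ p (f p) ∧ A₂ p (g p) := by
  classical
  choose f hf using h₁
  choose g hg using h₂
  have hf' : ∀ r, (Finset.univ.filter (fun p => f p = r)).card ≤ M := fun r => by
    rw [← Set.ncard_coe_finset]
    refine (Set.ncard_le_ncard ?_ (Set.toFinite _)).trans (hcap₁ r)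
    intro p hp
    have h : f p = r := by simpa using hp
    exact h ▸ hf p
  have hg' : ∀ r, (Finset.univ.filter (fun p => g p = r)).card ≤ M := fun r => by
    rw [← Set.ncard_coe_finset]
    refine (Set.ncard_le_ncard ?_ (Set.toFinite _)).trans (hcap₂ r)
    intro p hp
    have h : g p = r := by simpa using hp
    exact h ▸ hg p
  have hmin : γ * (4 * M) ≤ min J.ncard Jᶜ.ncard := hγdef ▸ Nat.div_mul_le_self _ _
  obtain ⟨hJ, hJc⟩ := le_min_iff.1 hmin
  rw [Set.ncard_eq_toFinset_card'] at hJ hJc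
  obtain ⟨S, hSJ, hS, hfS, hgS⟩ := exists_extension f g M hM hf' hg' J.toFinset ∅
    (by simp) (by simp) γ (by rw [Finset.card_empty]; nlinarith)
  rw [Finset.empty_union] at hfS hgS
  obtain ⟨S', hSJ', hS', hfS', hgS'⟩ := exists_extension f g M hM hf' hg' Jᶜ.toFinset S
    hfS hgS γ (by rw [hS]; nlinarith)
  rw [Finset.coe_union] at hfS' hgS'
  refine ⟨S, S', fun p hp => Set.mem_toFinset.1 (hSJ hp),
    fun p hp => Set.mem_toFinset.1 (hSJ' hp), ?_, ?_, f, g, hfS', hgS', fun p _ => ⟨hf p, hg p⟩⟩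
  · rw [Set.ncard_coe_finset, hS]
  · rw [Set.ncard_coe_finset, hS']
end

section
/- For every Δ ∈ (0, 1/2) and every Δ̃ > 0, define γ₁ = max(Δ, 1/(1 + exp(Δ̃ + Δ̃²))) and γ₂ = min(1 − Δ, 1/(1 + exp(−(Δ̃ + Δ̃²)))). Then γ₁ < 1/2 < γ₂, and there exist ν ∈ (0, Δ), ν̃ ∈ (0, Δ̃), and real numbers x₁, x₂ with γ₁ < x₁ < x₂ < γ₂ such that ((x₁ + ν) − g_{ν̃}(x₁)) · ((x₂ + ν) − g_{ν̃}(x₂)) < 0, where g_{ν̃}(t) = t·e^{ν̃} / (1 − t + t·e^{ν̃}). -/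
/-!
Writing `a = exp ν̃ - 1`, one has `g_{ν̃}(t) - t = φ a t` with `φ a t = t (1 - t) a / (1 + t a)`.
Since `φ a t / a` tends to `t (1 - t)` as `a → 0`, for small `a > 0` the value of `φ a` at a point
`x₁ < 1/2` is strictly below its value at `1/2` (`excess_lt`). Taking `x₁` between `γ₁` and `1/2`,
`x₂ = 1/2`, and `ν` the midpoint of `φ a x₁` and `φ a x₂`, the two factors are nonzero and opposite.
The bound `φ a t ≤ a` makes `ν < Δ`, and `ν̃ = log (1 + a)` is below `Δ̃` for small `a`.
-/

/-- The excess `g_{ν̃}(t) - t` of the logistic shift, in terms of `a = exp ν̃ - 1`. -/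
noncomputable def excess (a t : ℝ) : ℝ := t * (1 - t) * a / (1 + t * a)

lemma excess_pos {a t : ℝ} (ha : 0 < a) (ht : 0 < t) (ht1 : t < 1) : 0 < excess a t := by
  have : 0 < 1 - t := by linarith
  unfold excess
  positivity

lemma excess_lt_self {a t : ℝ} (ha : 0 < a) (ht : 0 < t) (ht1 : t < 1) : excess a t < a := by
  unfold excess
  have h1 : 0 < t * a := mul_pos ht ha
  rw [div_lt_iff₀ (by linarith)]
  have h2 : 0 < t * t * a := by positivity
  nlinarith [mul_pos h1 ha]

lemma sub_logistic {a t ν : ℝ} (ha : 0 < a) (ht : 0 < t) :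
    (t + ν) - t * (1 + a) / (1 - t + t * (1 + a)) = ν - excess a t := by
  have h : 0 < 1 + t * a := by positivity
  have e : 1 - t + t * (1 + a) = 1 + t * a := by ring
  unfold excess
  rw [e]
  field_simp
  ring

/-- To the left of `1/2` the excess is smaller than at `1/2`, provided `a` is small compared with
the distance to `1/2`. -/
lemma excess_lt {a x : ℝ} (ha : 0 < a) (hx : 0 < x) (hax : a < 1 / 2 - x) :
    excess a x < excess a (1 / 2) := by
  unfold excess
  rw [div_lt_div_iff₀ (by positivity) (by positivity)]
  -- With `d = 1/2 - x`, the claim divided by `a` reads `a d / 4 < d² (1 + a / 2)`.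
  have hd : 0 < 1 / 2 - x := ha.trans hax
  have key : 0 < a * ((1 / 2 - x) * ((1 / 2 - x) * (1 + a / 2) - a / 4)) := by
    refine mul_pos ha (mul_pos hd ?_)
    nlinarith [mul_pos hd ha]
  nlinarith [key]


/-- the core construction in the proof of Corollary 6. With
`γ₁ = max(Δ, 1/(1+exp(Δ̃+Δ̃²)))` and `γ₂ = min(1-Δ, 1/(1+exp(-(Δ̃+Δ̃²))))`, one has
`γ₁ < 1/2 < γ₂` and there exist admissible parameters `ν ∈ (0,Δ)`, `ν̃ ∈ (0,Δ̃)` and points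
`γ₁ < x₁ < x₂ < γ₂` where `h_ν - g_{ν̃}` takes strictly opposite signs. -/
theorem stmt_19 (Δ Δt : ℝ) (hΔ : Δ ∈ Set.Ioo (0 : ℝ) (1 / 2)) (hΔt : 0 < Δt) :
    max Δ (1 / (1 + Real.exp (Δt + Δt ^ 2))) < 1 / 2 ∧
    (1 : ℝ) / 2 < min (1 - Δ) (1 / (1 + Real.exp (-(Δt + Δt ^ 2)))) ∧
    ∃ ν ∈ Set.Ioo (0 : ℝ) Δ, ∃ νt ∈ Set.Ioo (0 : ℝ) Δt, ∃ x₁ x₂ : ℝ,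
      max Δ (1 / (1 + Real.exp (Δt + Δt ^ 2))) < x₁ ∧ x₁ < x₂ ∧
      x₂ < min (1 - Δ) (1 / (1 + Real.exp (-(Δt + Δt ^ 2)))) ∧
      ((x₁ + ν) - x₁ * Real.exp νt / (1 - x₁ + x₁ * Real.exp νt))
        * ((x₂ + ν) - x₂ * Real.exp νt / (1 - x₂ + x₂ * Real.exp νt)) < 0 := by
  obtain ⟨hΔ0, hΔ1⟩ := hΔ
  have hs : 0 < Δt + Δt ^ 2 := by positivity
  have hg1 : max Δ (1 / (1 + Real.exp (Δt + Δt ^ 2))) < 1 / 2 := by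
    refine max_lt hΔ1 (one_div_lt_one_div_of_lt two_pos ?_)
    linarith [Real.one_lt_exp_iff.2 hs]
  have hg2 : (1 : ℝ) / 2 < min (1 - Δ) (1 / (1 + Real.exp (-(Δt + Δt ^ 2)))) := by
    refine lt_min (by linarith) (one_div_lt_one_div_of_lt (by positivity) ?_)
    linarith [Real.exp_lt_one_iff.2 (neg_lt_zero.2 hs)]
  refine ⟨hg1, hg2, ?_⟩
  obtain ⟨x, hx1, hx2⟩ := exists_between hg1
  have hx0 : 0 < x := hΔ0.trans_le ((le_max_left _ _).trans hx1.le)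
  have hE : 0 < Real.exp Δt - 1 := by linarith [Real.one_lt_exp_iff.2 hΔt]
  obtain ⟨a, ha, ham⟩ := exists_between
    (lt_min (sub_pos.2 hx2) (lt_min hΔ0 hE))
  obtain ⟨had, ham⟩ := lt_min_iff.1 ham
  obtain ⟨haΔ, haE⟩ := lt_min_iff.1 ham
  have hlt := excess_lt ha hx0 had
  have hp := excess_pos ha hx0 (by linarith)
  have hu := excess_lt_self (t := 1 / 2) ha (by norm_num) (by norm_num)
  refine ⟨(excess a x + excess a (1 / 2)) / 2, ⟨by linarith, by linarith⟩,
    Real.log (1 + a), ⟨Real.log_pos (by linarith), ?_⟩, x, 1 / 2, hx1, hx2, hg2, ?_⟩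
  · rw [Real.log_lt_iff_lt_exp (by linarith)]
    linarith
  · rw [Real.exp_log (by linarith), sub_logistic ha hx0, sub_logistic ha (by norm_num)]
    exact mul_neg_of_pos_of_neg (by linarith) (by linarith)
end
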